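/- Let d be a positive integer, let T : ℝ^d → ℝ^d be an invertible linear map with lattice Λ = T(ℤ^d) and fundamental domain D = T([0,1)^d), and let p, r ∈ (0,∞] satisfy r ≤ min(1,p). Let f : ℝ^d → ℂ be measurable with |f(x + T(k))| = |f(x)| for all x ∈ ℝ^d and k ∈ ℤ^d, and let a : ℤ^d → ℂ satisfy ‖a‖_{ℓ^r(ℤ^d)} < ∞. Define g(x) = Σ_{k∈ℤ^d} |a(k)|·|f(x − T(k))|. Then ‖g‖_{L^p(D)} ≤ ‖a‖_{ℓ^r(ℤ^d)}·‖f‖_{L^p(D)}. -/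

import Mathlib

open MeasureTheory ENNReal

/-- The `L^p` quasi-norm of an `ℝ≥0∞`-valued function:
`(∫ g^p)^(1/p)` for `p < ∞`, and the essential supremum for `p = ∞`. -/
noncomputable def eLpNormENN {α : Type*} [MeasurableSpace α] (g : α → ℝ≥0∞)
    (p : ℝ≥0∞) (μ : Measure α) : ℝ≥0∞ :=
  if p = ⊤ then essSup g μ else (∫⁻ x, g x ^ p.toReal ∂μ) ^ (1 / p.toReal)

/-!
Periodicity of `|f|` makes `|f (x - T k)| = |f x|` for every `k`, so `g` is the pointwise product
`‖a‖_{ℓ¹} · |f|` and its `L^p` quasi-norm is at most `‖a‖_{ℓ¹} · ‖f‖_{L^p}`. Since `r ≤ 1`, the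
inclusion `ℓ^r ⊆ ℓ¹` is norm-decreasing.
-/

theorem rpow_tsum_le_tsum_rpow {ι : Type*} (b : ι → ℝ≥0∞) {t : ℝ} (ht : 0 < t) (ht1 : t ≤ 1) :
    (∑' i, b i) ^ t ≤ ∑' i, b i ^ t := by
  rw [← ENNReal.le_rpow_inv_iff ht, ENNReal.tsum_eq_iSup_sum]
  refine iSup_le fun s => (ENNReal.le_rpow_inv_iff ht).2 ?_
  calc (∑ i ∈ s, b i) ^ t
    _ ≤ ∑ i ∈ s, b i ^ t :=
      Finset.le_sum_of_subadditive (· ^ t) (ENNReal.zero_rpow_of_pos ht).le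
        (fun x y => ENNReal.rpow_add_le_add_rpow x y ht.le ht1) s b
    _ ≤ ∑' i, b i ^ t := ENNReal.sum_le_tsum s

section CountingMeasure

variable {ι ε : Type*} [MeasurableSpace ι] [MeasurableSingletonClass ι] [ENorm ε]

theorem eLpNorm_count_eq_tsum (a : ι → ε) {r : ℝ≥0∞} (hr : r ≠ 0) (hr_top : r ≠ ⊤) :
    eLpNorm a r Measure.count = (∑' k, ‖a k‖ₑ ^ r.toReal) ^ r.toReal⁻¹ := by
  rw [eLpNorm_eq_lintegral_rpow_enorm_toReal hr hr_top, lintegral_count, one_div]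

theorem eLpNorm_count_anti_exponent (a : ι → ε) {r s : ℝ≥0∞} (hr : r ≠ 0) (hrs : r ≤ s) :
    eLpNorm a s Measure.count ≤ eLpNorm a r Measure.count := by
  rcases eq_or_ne s ⊤ with rfl | hs_top
  · rw [eLpNorm_exponent_top, eLpNormEssSup_count]
    refine iSup_le fun k => ?_
    simpa only [enorm_eq_self, eLpNorm_enorm] using
      enorm_le_eLpNorm_count (fun k => ‖a k‖ₑ) k hr
  have hr_top : r ≠ ⊤ := ne_top_of_le_ne_top hs_top hrs
  have hs : s ≠ 0 := (hr.bot_lt.trans_le hrs).ne'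
  have hr_pos : 0 < r.toReal := ENNReal.toReal_pos hr hr_top
  have hs_pos : 0 < s.toReal := ENNReal.toReal_pos hs hs_top
  have ratio_le_one : r.toReal / s.toReal ≤ 1 :=
    div_le_one_of_le₀ (ENNReal.toReal_mono hs_top hrs) hs_pos.le
  rw [eLpNorm_count_eq_tsum a hs hs_top, eLpNorm_count_eq_tsum a hr hr_top,
    ENNReal.le_rpow_inv_iff hr_pos, ← ENNReal.rpow_mul, inv_mul_eq_div]
  calc (∑' k, ‖a k‖ₑ ^ s.toReal) ^ (r.toReal / s.toReal)
    _ ≤ ∑' k, (‖a k‖ₑ ^ s.toReal) ^ (r.toReal / s.toReal) :=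
      rpow_tsum_le_tsum_rpow _ (div_pos hr_pos hs_pos) ratio_le_one
    _ = ∑' k, ‖a k‖ₑ ^ r.toReal := by
      simp_rw [← ENNReal.rpow_mul, mul_div_cancel₀ _ hs_pos.ne']

theorem tsum_enorm_le_eLpNorm_count (a : ι → ε) {r : ℝ≥0∞} (hr : r ≠ 0) (hr1 : r ≤ 1) :
    ∑' k, ‖a k‖ₑ ≤ eLpNorm a r Measure.count := by
  simpa only [eLpNorm_one_eq_lintegral_enorm, lintegral_count] using
    eLpNorm_count_anti_exponent a hr hr1

end CountingMeasure

theorem eLpNormENN_eq_eLpNorm {α : Type*} [MeasurableSpace α] (g : α → ℝ≥0∞) {p : ℝ≥0∞}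
    (hp : p ≠ 0) (μ : Measure α) : eLpNormENN g p μ = eLpNorm g p μ := by
  rcases eq_or_ne p ⊤ with rfl | hp_top
  · simp only [eLpNormENN, if_true, eLpNorm_exponent_top, eLpNormEssSup, enorm_eq_self]
  · simp only [eLpNormENN, if_neg hp_top, eLpNorm_eq_lintegral_rpow_enorm_toReal hp hp_top,
      enorm_eq_self]

section PeriodicNorm

variable {ι E F ε : Type*} [AddGroup E] [ENorm ε] {τ : ι → E}

theorem tsum_enorm_mul_enorm_sub [ENorm F] {f : E → F} (a : ι → ε)
    (hper : ∀ k, Function.Periodic (fun x => ‖f x‖ₑ) (τ k)) (x : E) :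
    ∑' k, ‖a k‖ₑ * ‖f (x - τ k)‖ₑ = (∑' k, ‖a k‖ₑ) * ‖f x‖ₑ := by
  rw [← ENNReal.tsum_mul_right]
  exact tsum_congr fun k => congrArg (‖a k‖ₑ * ·) ((hper k).sub_eq x)

theorem stmt_8_general [MeasurableSpace ι] [MeasurableSingletonClass ι] [MeasurableSpace E]
    [TopologicalSpace F] [ContinuousENorm F] {f : E → F} {μ : Measure E} {p r : ℝ≥0∞}
    (hp : p ≠ 0) (hr : r ≠ 0) (hr1 : r ≤ 1)
    (hf : AEStronglyMeasurable f μ) (hper : ∀ k, Function.Periodic (fun x => ‖f x‖ₑ) (τ k))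
    (a : ι → ε) :
    eLpNormENN (fun x => ∑' k, ‖a k‖ₑ * ‖f (x - τ k)‖ₑ) p μ
      ≤ eLpNorm a r Measure.count * eLpNorm f p μ := by
  simp_rw [tsum_enorm_mul_enorm_sub a hper]
  calc eLpNormENN (fun x => (∑' k, ‖a k‖ₑ) * ‖f x‖ₑ) p μ
    _ = eLpNorm (fun x => (∑' k, ‖a k‖ₑ) * ‖f x‖ₑ) p μ := eLpNormENN_eq_eLpNorm _ hp μ
    _ ≤ (∑' k, ‖a k‖ₑ) * eLpNorm f p μ :=
      eLpNorm_le_mul_eLpNorm_of_ae_le_mul'' p hf (.of_forall fun _ => le_rfl)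
    _ ≤ eLpNorm a r Measure.count * eLpNorm f p μ := by
      gcongr
      exact tsum_enorm_le_eLpNorm_count a hr hr1

end PeriodicNorm

/-- If `f` has `Λ`-periodic absolute value for the lattice `Λ = T(ℤ^d)`,
`D = T([0,1)^d)` is a fundamental domain, `r ≤ min(1,p)`, `‖a‖_{ℓ^r} < ∞`, and
`g(x) = Σ_k |a(k)|·|f(x − T(k))|`, then `‖g‖_{L^p(D)} ≤ ‖a‖_{ℓ^r}·‖f‖_{L^p(D)}`. -/
theorem stmt_8 (d : ℕ) (hd : 0 < d) (T : (Fin d → ℝ) ≃ₗ[ℝ] (Fin d → ℝ))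
    (p r : ℝ≥0∞) (hp : 0 < p) (hr : 0 < r) (hrp : r ≤ min 1 p)
    (f : (Fin d → ℝ) → ℂ) (hf : Measurable f)
    (hper : ∀ (x : Fin d → ℝ) (k : Fin d → ℤ),
      ‖f (x + T (fun i => (k i : ℝ)))‖ = ‖f x‖)
    (a : (Fin d → ℤ) → ℂ)
    (ha : eLpNorm a r (Measure.count : Measure (Fin d → ℤ)) < ⊤)
    (g : (Fin d → ℝ) → ℝ≥0∞)
    (hg : ∀ x, g x = ∑' k : Fin d → ℤ,
      (‖a k‖₊ : ℝ≥0∞) * (‖f (x - T (fun i => (k i : ℝ)))‖₊ : ℝ≥0∞))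
    (D : Set (Fin d → ℝ))
    (hD : D = (⇑T) '' (Set.univ.pi fun _ => Set.Ico (0 : ℝ) 1)) :
    eLpNormENN g p (volume.restrict D)
      ≤ eLpNorm a r (Measure.count : Measure (Fin d → ℤ))
          * eLpNorm f p (volume.restrict D) := by
  obtain rfl := funext hg
  exact stmt_8_general hp.ne' hr.ne' (hrp.trans (min_le_left 1 p)) hf.aestronglyMeasurable
    (fun k x => enorm_eq_iff_norm_eq.2 (hper x k)) a
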